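/- arXiv:1804.07018 — 5 statements merged into one kernel-verified Lean document; each statement's English description precedes it below -/
import Mathlib

section
/- (Uniqueness of the constant equilibrium intensity in Theorem 4.2.) Let μ ∈ ℝ, σ > 0 with 2μ + σ² < 0, and let λ > 0. Set a := λ/(λ − μ) and c := λ/(λ − 2μ − σ²) (both denominators are positive). Then c − a² = (a − 1)² holds if and only if 2μ³ + μ²σ² + σ²λ² = 0, which holds if and only if λ = √(−μ²(2μ + σ²)/σ²). -/
/-!
The condition `2μ + σ² < 0` forces `μ < 0`, so both denominators are positive. Over their common
denominator, the numerator of `c - a² - (a - 1)²` loses its terms of degree three and one in `lam`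
and becomes `2μ³ + μ²σ² + σ²lam²`. Its vanishing prescribes `lam²`, and `lam` is the positive root.
-/

section EquilibriumCondition

variable {K : Type*} [Field K] {m s l : K}

theorem equilibrium_defect_eq_div (hm : l - m ≠ 0) (hs : l - 2 * m - s ≠ 0) :
    l / (l - 2 * m - s) - (l / (l - m)) ^ 2 - (l / (l - m) - 1) ^ 2 =
      (2 * m ^ 3 + m ^ 2 * s + s * l ^ 2) / ((l - m) ^ 2 * (l - 2 * m - s)) := by
  field_simp
  ring

theorem equilibrium_iff_cubic_eq_zero (hm : l - m ≠ 0) (hs : l - 2 * m - s ≠ 0) :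
    l / (l - 2 * m - s) - (l / (l - m)) ^ 2 = (l / (l - m) - 1) ^ 2 ↔
      2 * m ^ 3 + m ^ 2 * s + s * l ^ 2 = 0 := by
  have denom_ne_zero : (l - m) ^ 2 * (l - 2 * m - s) ≠ 0 := mul_ne_zero (pow_ne_zero 2 hm) hs
  rw [← sub_eq_zero, equilibrium_defect_eq_div hm hs, div_eq_zero_iff, or_iff_left denom_ne_zero]

end EquilibriumCondition

-- For `-b / d < 0` both sides are false, since `Real.sqrt` is then `0`.
theorem add_mul_sq_eq_zero_iff_eq_sqrt {b d x : ℝ} (hd : d ≠ 0) (hx : 0 < x) :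
    b + d * x ^ 2 = 0 ↔ x = Real.sqrt (-b / d) := by
  rw [eq_comm (a := x), Real.sqrt_eq_iff_mul_self_eq_of_pos hx, eq_div_iff hd,
    add_comm, add_eq_zero_iff_eq_neg, mul_comm d, sq]

/-- Uniqueness of the constant equilibrium intensity in Theorem 4.2. For `σ > 0`,
`2μ + σ² < 0` and `lam > 0`, with `a = lam/(lam − μ)` and `c = lam/(lam − 2μ − σ²)`, the
equilibrium condition `c − a² = (a − 1)²` holds iff `2μ³ + μ²σ² + σ²lam² = 0`, which holds
iff `lam = √(−μ²(2μ + σ²)/σ²)`. -/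
theorem unique_constant_equilibrium_intensity
    (μ σ lam : ℝ) (hσ : 0 < σ) (hμσ : 2 * μ + σ ^ 2 < 0) (hlam : 0 < lam)
    (a c : ℝ) (ha : a = lam / (lam - μ)) (hc : c = lam / (lam - 2 * μ - σ ^ 2)) :
    (c - a ^ 2 = (a - 1) ^ 2 ↔ 2 * μ ^ 3 + μ ^ 2 * σ ^ 2 + σ ^ 2 * lam ^ 2 = 0) ∧
      (2 * μ ^ 3 + μ ^ 2 * σ ^ 2 + σ ^ 2 * lam ^ 2 = 0 ↔
        lam = Real.sqrt (-(μ ^ 2) * (2 * μ + σ ^ 2) / σ ^ 2)) := by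
  have lam_sub_pos : 0 < lam - μ := by linarith [sq_nonneg σ]
  have lam_sub_sub_pos : 0 < lam - 2 * μ - σ ^ 2 := by linarith
  have constant_term_eq : 2 * μ ^ 3 + μ ^ 2 * σ ^ 2 = μ ^ 2 * (2 * μ + σ ^ 2) := by ring
  subst ha hc
  refine ⟨equilibrium_iff_cubic_eq_zero lam_sub_pos.ne' lam_sub_sub_pos.ne', ?_⟩
  rw [constant_term_eq, neg_mul]
  exact add_mul_sq_eq_zero_iff_eq_sqrt (pow_ne_zero 2 hσ.ne') hlam
end

section
/- (Inequality (4.22) in the proof of Theorem 4.3.) Let ξ ∈ (0, 1/2], γ > 0 and b = ξ/(γ(1 − ξ)). Then for all x with 0 < x < b, x^{1−ξ}(b^ξ − γb^{1+ξ}) + γb^{2ξ}x^{2−2ξ} ≥ x (real powers). -/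
/-!
Put `u = (x / b) ^ (1 - ξ)`, which for `x ≤ b` is the probability that the process started at `x`
ever reaches `b`, and `w = γ b = ξ / (1 - ξ)`. As `X_τ` takes the value `b` with probability `u`
and `0` otherwise, `V(x) = b u - γ b² (u - u²) = b ((1 - w) u + w u²)`. Since `1 + w` is the inverse
of `1 - ξ`, also `x = b u ^ (1 + w)`. So `x ≤ V(x)` compares the convex function `s ↦ u ^ s` with
its chord between `s = 1` and `s = 2`, where `w ≤ 1` because `ξ ≤ 1/2`.
-/

lemma rpow_one_add_le_one_sub_mul_add_mul_sq {u w : ℝ} (hu : 0 ≤ u) (hw : w ∈ Set.Icc 0 1) :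
    u ^ (1 + w) ≤ (1 - w) * u + w * u ^ 2 := by
  have bernoulli : u ^ w ≤ 1 + w * (u - 1) := by
    simpa only [add_sub_cancel] using
      rpow_one_add_le_one_add_mul_self (by linarith : -1 ≤ u - 1) hw.1 hw.2
  calc u ^ (1 + w) = u * u ^ w := by
        rw [Real.rpow_add_of_nonneg hu zero_le_one hw.1, Real.rpow_one]
    _ ≤ u * (1 + w * (u - 1)) := mul_le_mul_of_nonneg_left bernoulli hu
    _ = (1 - w) * u + w * u ^ 2 := by ring

section ThresholdValue

variable {ξ γ b x : ℝ}

lemma rpow_mul_rpow_one_sub_eq_mul_div_rpow (hb : 0 < b) (hx : 0 ≤ x) :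
    b ^ ξ * x ^ (1 - ξ) = b * (x / b) ^ (1 - ξ) := by
  have hsplit : b ^ ξ * b ^ (1 - ξ) = b := by
    rw [← Real.rpow_add hb, add_sub_cancel, Real.rpow_one]
  rw [Real.div_rpow hx hb.le, mul_div_assoc', eq_div_iff (by positivity), mul_right_comm, hsplit]

lemma mean_variance_value_eq_quadratic (hb : 0 < b) (hx : 0 ≤ x) :
    x ^ (1 - ξ) * (b ^ ξ - γ * b ^ (1 + ξ)) + γ * b ^ (2 * ξ) * x ^ (2 - 2 * ξ) =
      b * ((1 - γ * b) * (x / b) ^ (1 - ξ) + γ * b * ((x / b) ^ (1 - ξ)) ^ 2) := by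
  have hb_succ : b ^ (1 + ξ) = b * b ^ ξ := by rw [Real.rpow_add hb, Real.rpow_one]
  have hb_sq : b ^ (2 * ξ) = (b ^ ξ) ^ 2 := by
    rw [mul_comm, Real.rpow_mul hb.le, Real.rpow_two]
  have hx_sq : x ^ (2 - 2 * ξ) = (x ^ (1 - ξ)) ^ 2 := by
    rw [← Real.rpow_two, ← Real.rpow_mul hx]
    ring_nf
  calc x ^ (1 - ξ) * (b ^ ξ - γ * b ^ (1 + ξ)) + γ * b ^ (2 * ξ) * x ^ (2 - 2 * ξ)
      = (1 - γ * b) * (b ^ ξ * x ^ (1 - ξ)) + γ * (b ^ ξ * x ^ (1 - ξ)) ^ 2 := by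
        rw [hb_succ, hb_sq, hx_sq]
        ring
    _ = b * ((1 - γ * b) * (x / b) ^ (1 - ξ) + γ * b * ((x / b) ^ (1 - ξ)) ^ 2) := by
        rw [rpow_mul_rpow_one_sub_eq_mul_div_rpow hb hx]
        ring

lemma mul_div_rpow_le_mean_variance_value (hb : 0 < b) (hx : 0 ≤ x)
    (hγb : γ * b ∈ Set.Icc 0 1) :
    b * (x / b) ^ ((1 - ξ) * (1 + γ * b)) ≤
      x ^ (1 - ξ) * (b ^ ξ - γ * b ^ (1 + ξ)) + γ * b ^ (2 * ξ) * x ^ (2 - 2 * ξ) := by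
  rw [mean_variance_value_eq_quadratic hb hx, Real.rpow_mul (by positivity)]
  gcongr
  exact rpow_one_add_le_one_sub_mul_add_mul_sq (by positivity) hγb

theorem mean_variance_value_dominates_identity_general
    (hξ : ξ ∈ Set.Ioc (0 : ℝ) (1 / 2)) (hγ : 0 < γ) (hb : b = ξ / (γ * (1 - ξ))) (hx : 0 ≤ x) :
    x ≤ x ^ (1 - ξ) * (b ^ ξ - γ * b ^ (1 + ξ)) + γ * b ^ (2 * ξ) * x ^ (2 - 2 * ξ) := by
  obtain ⟨hξ_pos, hξ_le⟩ := hξ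
  have hξ_compl : 0 < 1 - ξ := by linarith
  have hb_pos : 0 < b := by rw [hb]; positivity
  have hγb : γ * b = ξ / (1 - ξ) := by rw [hb]; field_simp
  have hγb_mem : γ * b ∈ Set.Icc 0 1 :=
    ⟨by positivity, by rw [hγb, div_le_one hξ_compl]; linarith⟩
  have hexponent : (1 - ξ) * (1 + γ * b) = 1 := by rw [hγb]; field_simp; ring
  calc x = b * (x / b) ^ ((1 - ξ) * (1 + γ * b)) := by
        rw [hexponent, Real.rpow_one, mul_div_cancel₀ x hb_pos.ne']
    _ ≤ _ := mul_div_rpow_le_mean_variance_value hb_pos hx hγb_mem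

end ThresholdValue

/-- Inequality (4.22) in the proof of Theorem 4.3: for `ξ ∈ (0, 1/2]`, `γ > 0` and
`b = ξ/(γ(1 − ξ))`, one has `x^(1−ξ)(b^ξ − γb^(1+ξ)) + γb^(2ξ)x^(2−2ξ) ≥ x`
for all `0 < x < b` (real powers). -/
theorem mean_variance_value_dominates_identity
    (ξ γ b : ℝ) (hξ : ξ ∈ Set.Ioc (0 : ℝ) (1 / 2)) (hγ : 0 < γ)
    (hb : b = ξ / (γ * (1 - ξ))) :
    ∀ x : ℝ, 0 < x → x < b →
      x ^ (1 - ξ) * (b ^ ξ - γ * b ^ (1 + ξ)) + γ * b ^ (2 * ξ) * x ^ (2 - 2 * ξ) ≥ x :=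
  fun _ hx _ ↦ mean_variance_value_dominates_identity_general hξ hγ hb hx.le
end

section
/- (Failure of the equilibrium inequality for ξ ∈ (1/2, 1).) Let ξ ∈ (1/2, 1), γ > 0 and b = ξ/(γ(1 − ξ)). Then there exists x with 0 < x < b such that x^{1−ξ}(b^ξ − γb^{1+ξ}) + γb^{2ξ}x^{2−2ξ} < x (real powers). -/
/-!
Started at `x < b`, the geometric Brownian motion reaches `b`, where it is stopped, with probability
`p = (x / b) ^ (1 - ξ)` and tends to `0` otherwise, so the left-hand side of the inequality is
`V(x) = b p - γ b² p (1 - p) = b p (1 - γ b (1 - p))`. If `γ b > 1`, then `V` vanishes at the point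
of `(0, b)` where `p = 1 - 1 / (γ b)`. For the smooth-fit threshold, `γ b = ξ / (1 - ξ)` exceeds `1`
exactly when `ξ > 1 / 2`.
-/

/-- The probability that a geometric Brownian motion with `2 μ / σ² = ξ < 1`, started at
`x ∈ (0, b]`, ever reaches the level `b`. It is given by its closed form, and it is the coordinate
in which the value of a threshold strategy becomes a quadratic polynomial. -/
noncomputable def hittingProb (ξ b x : ℝ) : ℝ :=
  (x / b) ^ (1 - ξ)

/-- The mean-variance value `V(x)` of stopping at the threshold `b`, in the expanded form of the
paper. It has this meaning for `0 < x < b` only. -/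
noncomputable def thresholdValue (ξ γ b x : ℝ) : ℝ :=
  x ^ (1 - ξ) * (b ^ ξ - γ * b ^ (1 + ξ)) + γ * b ^ (2 * ξ) * x ^ (2 - 2 * ξ)

section

variable {ξ γ b x p : ℝ}

theorem rpow_mul_rpow_one_sub_eq_mul_hittingProb (hb : 0 < b) (hx : 0 ≤ x) :
    b ^ ξ * x ^ (1 - ξ) = b * hittingProb ξ b x := by
  rw [hittingProb, Real.div_rpow hx hb.le, Real.rpow_sub hb, Real.rpow_one]
  field_simp

theorem thresholdValue_eq_mean_sub_variance (hb : 0 < b) (hx : 0 ≤ x) :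
    thresholdValue ξ γ b x =
      b * hittingProb ξ b x - γ * (b ^ 2 * (hittingProb ξ b x * (1 - hittingProb ξ b x))) := by
  have hb_succ : b ^ (1 + ξ) = b * b ^ ξ := by rw [Real.rpow_add hb, Real.rpow_one]
  have hb_sq : b ^ (2 * ξ) = (b ^ ξ) ^ 2 := by
    rw [mul_comm, Real.rpow_mul hb.le, Real.rpow_two]
  have hx_sq : x ^ (2 - 2 * ξ) = (x ^ (1 - ξ)) ^ 2 := by
    rw [← Real.rpow_two, ← Real.rpow_mul hx]
    ring_nf
  calc thresholdValue ξ γ b x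
      = (b ^ ξ * x ^ (1 - ξ)) * (1 - γ * b) + γ * (b ^ ξ * x ^ (1 - ξ)) ^ 2 := by
        rw [thresholdValue, hb_succ, hb_sq, hx_sq]
        ring
    _ = _ := by
        rw [rpow_mul_rpow_one_sub_eq_mul_hittingProb hb hx]
        ring

theorem exists_hittingProb_eq (hξ : ξ < 1) (hb : 0 < b) (hp : p ∈ Set.Ioo (0 : ℝ) 1) :
    ∃ x ∈ Set.Ioo 0 b, hittingProb ξ b x = p := by
  obtain ⟨hp_pos, hp_lt_one⟩ := hp
  have hexp : 0 < 1 - ξ := sub_pos.mpr hξ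
  refine ⟨b * p ^ (1 - ξ)⁻¹, ⟨by positivity, ?_⟩, ?_⟩
  · exact mul_lt_of_lt_one_right hb (Real.rpow_lt_one hp_pos.le hp_lt_one (inv_pos.mpr hexp))
  · rw [hittingProb, mul_div_cancel_left₀ _ hb.ne', Real.rpow_inv_rpow hp_pos.le hexp.ne']

theorem exists_thresholdValue_eq_zero (hξ : ξ < 1) (hb : 0 < b) (hγb : 1 < γ * b) :
    ∃ x ∈ Set.Ioo 0 b, thresholdValue ξ γ b x = 0 := by
  have hp : 1 - (γ * b)⁻¹ ∈ Set.Ioo (0 : ℝ) 1 :=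
    ⟨sub_pos.mpr (inv_lt_one_of_one_lt₀ hγb), sub_lt_self _ (by positivity)⟩
  obtain ⟨x, hx, hprob⟩ := exists_hittingProb_eq hξ hb hp
  refine ⟨x, hx, ?_⟩
  rw [thresholdValue_eq_mean_sub_variance hb hx.1.le, hprob]
  have hcancel : γ * b * (γ * b)⁻¹ = 1 := mul_inv_cancel₀ (by positivity)
  linear_combination -b * (1 - (γ * b)⁻¹) * hcancel

theorem one_lt_mul_smoothFit_threshold (hξ : ξ ∈ Set.Ioo (1 / 2 : ℝ) 1) (hγ : γ ≠ 0) :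
    1 < γ * (ξ / (γ * (1 - ξ))) := by
  rw [← mul_div_assoc, mul_div_mul_left _ _ hγ, one_lt_div (sub_pos.mpr hξ.2)]
  linarith [hξ.1]

theorem mean_variance_value_fails_to_dominate_general (hξ : ξ < 1) (hb : 0 < b)
    (hγb : 1 < γ * b) :
    ∃ x : ℝ, 0 < x ∧ x < b ∧
      x ^ (1 - ξ) * (b ^ ξ - γ * b ^ (1 + ξ)) + γ * b ^ (2 * ξ) * x ^ (2 - 2 * ξ) < x := by
  obtain ⟨x, ⟨hx_pos, hx_lt⟩, hzero⟩ := exists_thresholdValue_eq_zero hξ hb hγb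
  exact ⟨x, hx_pos, hx_lt, hzero.trans_lt hx_pos⟩

end

/-- Failure of the equilibrium inequality for `ξ ∈ (1/2, 1)`: with `γ > 0` and
`b = ξ/(γ(1 − ξ))`, there exists `0 < x < b` with
`x^(1−ξ)(b^ξ − γb^(1+ξ)) + γb^(2ξ)x^(2−2ξ) < x` (real powers). -/
theorem mean_variance_value_fails_to_dominate
    (ξ γ b : ℝ) (hξ : ξ ∈ Set.Ioo (1 / 2 : ℝ) 1) (hγ : 0 < γ)
    (hb : b = ξ / (γ * (1 - ξ))) :
    ∃ x : ℝ, 0 < x ∧ x < b ∧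
      x ^ (1 - ξ) * (b ^ ξ - γ * b ^ (1 + ξ)) + γ * b ^ (2 * ξ) * x ^ (2 - 2 * ξ) < x := by
  have hγb : 1 < γ * b := hb ▸ one_lt_mul_smoothFit_threshold hξ hγ.ne'
  exact mean_variance_value_fails_to_dominate_general hξ.2
    (pos_of_mul_pos_right (zero_lt_one.trans hγb) hγ.le) hγb
end

section
/- Let ξ ∈ (0,1) with ξ ≠ 1/2, and let a, c ∈ ℝ. Then the set {x ∈ (0,∞) : x^ξ = a + c·x^{1−ξ}} (real powers) has at most two elements. -/
/-!
On the positive half-line, `x ^ p - c * x ^ q` has derivative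
`x ^ (p - 1) * (p - c * q * x ^ (q - p))`. When `p ≠ 0` and `p ≠ q`, the second factor vanishes at
most once, because `x ↦ x ^ (q - p)` is injective there. By Rolle's theorem, `x ^ p - c * x ^ q`
then takes each value at most twice. The theorem is the case `p = ξ`, `q = 1 - ξ`.
-/

open Set

lemma encard_le_encard_add_one_of_interleaved {α : Type*} [LinearOrder α] {s t : Set α}
    (h : ∀ x ∈ s, ∀ y ∈ s, x < y → ∃ z ∈ t, x < z ∧ z < y) : s.encard ≤ t.encard + 1 := by
  rcases t.finite_or_infinite with ht | ht
  · lift t to Finset α using ht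
    by_contra! hlt
    obtain ⟨u, hus, hu⟩ := exists_subset_encard_eq (Order.add_one_le_of_lt hlt)
    have hu_fin : u.Finite := finite_of_encard_le_coe (k := t.card + 1 + 1) (by simp [hu])
    lift u to Finset α using hu_fin
    have hcard : u.card ≤ t.card + 1 :=
      Finset.card_le_of_interleaved fun x hx y hy hxy _ => h x (hus hx) y (hus hy) hxy
    rw [encard_coe_eq_coe_finsetCard, encard_coe_eq_coe_finsetCard] at hu
    norm_cast at hu
    omega
  · simp [ht.encard_eq]

lemma eq_or_eq_or_eq_of_encard_le_two {α : Type*} {s : Set α} (hs : s.encard ≤ 2) {x y z : α}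
    (hx : x ∈ s) (hy : y ∈ s) (hz : z ∈ s) : x = y ∨ x = z ∨ y = z := by
  by_contra! hne
  have hfin : s.Finite := finite_of_encard_le_coe (k := 2) hs
  have htwo_lt : 2 < s.ncard := (two_lt_ncard_iff hfin).2 ⟨x, y, z, hx, hy, hz, hne⟩
  rw [← hfin.cast_ncard_eq] at hs
  exact htwo_lt.not_ge (mod_cast hs)

-- Points where `f` is not differentiable count as zeros of `deriv f`.
lemma encard_level_set_le_encard_deriv_eq_zero_add_one {f : ℝ → ℝ} {s : Set ℝ}
    (hs : s.OrdConnected) (hf : ContinuousOn f s) (b : ℝ) :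
    {x ∈ s | f x = b}.encard ≤ {x ∈ s | deriv f x = 0}.encard + 1 := by
  refine encard_le_encard_add_one_of_interleaved ?_
  rintro x ⟨hx, hfx⟩ y ⟨hy, hfy⟩ hxy
  obtain ⟨z, hz, hfz⟩ := exists_deriv_eq_zero hxy (hf.mono (hs.out hx hy)) (hfx.trans hfy.symm)
  exact ⟨z, ⟨hs.out hx hy (Ioo_subset_Icc_self hz), hfz⟩, hz⟩

section RpowBinomial

variable {p q : ℝ} (c : ℝ)

lemma deriv_rpow_sub_const_mul_rpow {x : ℝ} (hx : 0 < x) :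
    deriv (fun x : ℝ => x ^ p - c * x ^ q) x = x ^ (p - 1) * (p - c * q * x ^ (q - p)) := by
  have hderiv : HasDerivAt (fun x : ℝ => x ^ p - c * x ^ q)
      (p * x ^ (p - 1) - c * (q * x ^ (q - 1))) x :=
    (Real.hasDerivAt_rpow_const (.inl hx.ne')).sub
      ((Real.hasDerivAt_rpow_const (.inl hx.ne')).const_mul c)
  have hpow : x ^ (q - 1) = x ^ (p - 1) * x ^ (q - p) := by
    rw [← Real.rpow_add hx]
    ring_nf
  rw [hderiv.deriv, hpow]
  ring

lemma subsingleton_deriv_rpow_sub_const_mul_rpow_eq_zero (hp : p ≠ 0) (hpq : p ≠ q) :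
    {x ∈ Ioi (0 : ℝ) | deriv (fun x : ℝ => x ^ p - c * x ^ q) x = 0}.Subsingleton := by
  have critical_eq {x : ℝ} (hx : 0 < x)
      (hdx : deriv (fun x : ℝ => x ^ p - c * x ^ q) x = 0) : c * q * x ^ (q - p) = p := by
    rw [deriv_rpow_sub_const_mul_rpow c hx, mul_eq_zero_iff_left (by positivity)] at hdx
    linarith
  rintro x ⟨hx, hdx⟩ y ⟨hy, hdy⟩
  have hcx := critical_eq hx hdx
  have hcy := critical_eq hy hdy
  have hcq : c * q ≠ 0 := left_ne_zero_of_mul (hcx.trans_ne hp)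
  have hpow : x ^ (q - p) = y ^ (q - p) := mul_left_cancel₀ hcq (hcx.trans hcy.symm)
  exact (Real.rpow_left_inj (mem_Ioi.1 hx).le (mem_Ioi.1 hy).le (sub_ne_zero.2 hpq.symm)).1 hpow

end RpowBinomial

theorem rpow_equation_at_most_two_solutions_general {p q : ℝ} (a c : ℝ)
    (hp : p ≠ 0) (hpq : p ≠ q) :
    {x : ℝ | 0 < x ∧ x ^ p = a + c * x ^ q}.encard ≤ 2 := by
  have hcont : ContinuousOn (fun x : ℝ => x ^ p - c * x ^ q) (Ioi 0) := fun x hx =>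
    ((Real.continuousAt_rpow_const x p (.inl (ne_of_gt hx))).sub
      ((Real.continuousAt_rpow_const x q (.inl (ne_of_gt hx))).const_mul c)).continuousWithinAt
  calc {x : ℝ | 0 < x ∧ x ^ p = a + c * x ^ q}.encard
      = {x ∈ Ioi (0 : ℝ) | x ^ p - c * x ^ q = a}.encard := by
        simp only [mem_Ioi, sub_eq_iff_eq_add]
    _ ≤ {x ∈ Ioi (0 : ℝ) | deriv (fun x : ℝ => x ^ p - c * x ^ q) x = 0}.encard + 1 :=
        encard_level_set_le_encard_deriv_eq_zero_add_one ordConnected_Ioi hcont a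
    _ ≤ 1 + 1 := by
        gcongr
        exact encard_le_one_iff_subsingleton.2
          (subsingleton_deriv_rpow_sub_const_mul_rpow_eq_zero c hp hpq)
    _ = 2 := one_add_one_eq_two

/-- For `ξ ∈ (0,1)` with `ξ ≠ 1/2` and `a, c ∈ ℝ`, the set
`{x ∈ (0,∞) : x^ξ = a + c·x^(1−ξ)}` (real powers) has at most two elements. -/
theorem rpow_equation_at_most_two_solutions
    (ξ a c : ℝ) (hξ : ξ ∈ Set.Ioo (0 : ℝ) 1) (hξ' : ξ ≠ 1 / 2) :
    ∀ x y z : ℝ,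
      x ∈ {x : ℝ | 0 < x ∧ x ^ ξ = a + c * x ^ (1 - ξ)} →
      y ∈ {x : ℝ | 0 < x ∧ x ^ ξ = a + c * x ^ (1 - ξ)} →
      z ∈ {x : ℝ | 0 < x ∧ x ^ ξ = a + c * x ^ (1 - ξ)} →
      x = y ∨ x = z ∨ y = z := by
  have hne : ξ ≠ 1 - ξ := fun h => hξ' (by linarith)
  exact fun _ _ _ => eq_or_eq_or_eq_of_encard_le_two
    (rpow_equation_at_most_two_solutions_general a c hξ.1.ne' hne)
end

section
/- (Case 4 of the proof of Theorem 4.3.) Let ξ ∈ (0,1) with ξ ≠ 1/2, let c₅, c₆, c₇ ∈ ℝ, and define M : (0,∞) → ℝ by M(x) = c₅x^{1−ξ} + c₆ + c₇x^{2−2ξ} − x (real powers). If 0 < c < d and M'(c) = M'(d) = 0, then M is strictly monotone on [c, d]; in particular M(c) ≠ M(d), so M(c) and M(d) cannot both equal 0. -/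
/-!
For `x > 0` the derivative of `M` has the form `A x ^ α + B x ^ β - 1` with `α, β ≠ 0`. By Rolle's
theorem such a function has at most two positive zeros: three zeros would give two zeros of
`α A x ^ (α - 1) + β B x ^ (β - 1)`, which forces this function to vanish identically. So if `M'`
vanishes at `c` and `d`, it has no zero in between, and by Darboux's theorem it has a constant sign
on `(c, d)`.
-/

open Set

lemma strictMonoOn_or_strictAntiOn_of_deriv_ne_zero {s : Set ℝ} (hs : Convex ℝ s) {f : ℝ → ℝ}
    (hf : ContinuousOn f s) (hf' : ∀ x ∈ interior s, deriv f x ≠ 0) :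
    StrictMonoOn f s ∨ StrictAntiOn f s := by
  have hderiv : ∀ x ∈ interior s, HasDerivWithinAt f (deriv f x) (interior s) x := fun x hx =>
    (differentiableAt_of_deriv_ne_zero (hf' x hx)).hasDerivAt.hasDerivWithinAt
  rcases hasDerivWithinAt_forall_lt_or_forall_gt_of_forall_ne hs.interior hderiv hf'
    with hneg | hpos
  · exact .inr (strictAntiOn_of_deriv_neg hs hf hneg)
  · exact .inl (strictMonoOn_of_deriv_pos hs hf hpos)

section RpowSums

variable {a b α β x y : ℝ}

lemma hasDerivAt_mul_rpow_add_mul_rpow (a b α β : ℝ) (hx : x ≠ 0) :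
    HasDerivAt (fun t : ℝ => a * t ^ α + b * t ^ β)
      (a * α * x ^ (α - 1) + b * β * x ^ (β - 1)) x := by
  simpa only [mul_assoc] using
    ((Real.hasDerivAt_rpow_const (p := α) (.inl hx)).const_mul a).fun_add
      ((Real.hasDerivAt_rpow_const (p := β) (.inl hx)).const_mul b)

lemma mul_rpow_sub_eq_neg (hx : 0 < x) (h : a * x ^ α + b * x ^ β = 0) :
    a * x ^ (α - β) = -b := by
  have hxβ : x ^ β ≠ 0 := (Real.rpow_pos_of_pos hx β).ne'
  rw [Real.rpow_sub hx]
  field_simp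
  linarith

lemma eq_and_add_eq_zero_or_of_mul_rpow_add_mul_rpow_eq_zero (hx : 0 < x) (hy : 0 < y)
    (hxy : x ≠ y) (hx₀ : a * x ^ α + b * x ^ β = 0) (hy₀ : a * y ^ α + b * y ^ β = 0) :
    (α = β ∧ a + b = 0) ∨ (a = 0 ∧ b = 0) := by
  have hxb : a * x ^ (α - β) = -b := mul_rpow_sub_eq_neg hx hx₀
  have hyb : a * y ^ (α - β) = -b := mul_rpow_sub_eq_neg hy hy₀
  by_cases hαβ : α = β
  · rw [hαβ, sub_self, Real.rpow_zero] at hxb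
    exact .inl ⟨hαβ, by linarith⟩
  · have hpow : x ^ (α - β) ≠ y ^ (α - β) := fun h =>
      hxy ((Real.rpow_left_inj hx.le hy.le (sub_ne_zero.2 hαβ)).1 h)
    have ha : a = 0 := (mul_eq_mul_left_iff.1 (hxb.trans hyb.symm)).resolve_left hpow
    exact .inr ⟨ha, by simpa [ha] using hxb⟩

lemma exists_mem_Ioo_deriv_mul_rpow_add_mul_rpow_eq_zero (hx : 0 < x) (hxy : x < y)
    (h : a * x ^ α + b * x ^ β = a * y ^ α + b * y ^ β) :
    ∃ t ∈ Ioo x y, a * α * t ^ (α - 1) + b * β * t ^ (β - 1) = 0 := by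
  have hderiv : ∀ t, x ≤ t → HasDerivAt (fun t : ℝ => a * t ^ α + b * t ^ β)
      (a * α * t ^ (α - 1) + b * β * t ^ (β - 1)) t := fun t ht =>
    hasDerivAt_mul_rpow_add_mul_rpow a b α β (hx.trans_le ht).ne'
  exact exists_hasDerivAt_eq_zero hxy
    (fun t ht => (hderiv t ht.1).continuousAt.continuousWithinAt) h fun t ht => hderiv t ht.1.le

lemma eq_zero_of_mul_rpow_add_mul_rpow_eq {z k : ℝ} (hα : α ≠ 0) (hβ : β ≠ 0)
    (hx : 0 < x) (hxy : x < y) (hyz : y < z) (hxk : a * x ^ α + b * x ^ β = k)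
    (hyk : a * y ^ α + b * y ^ β = k) (hzk : a * z ^ α + b * z ^ β = k) : k = 0 := by
  have hy : 0 < y := hx.trans hxy
  obtain ⟨u, ⟨hxu, huy⟩, hu₀⟩ :=
    exists_mem_Ioo_deriv_mul_rpow_add_mul_rpow_eq_zero hx hxy (hxk.trans hyk.symm)
  obtain ⟨v, ⟨hyv, -⟩, hv₀⟩ :=
    exists_mem_Ioo_deriv_mul_rpow_add_mul_rpow_eq_zero hy hyz (hyk.trans hzk.symm)
  rcases eq_and_add_eq_zero_or_of_mul_rpow_add_mul_rpow_eq_zero (hx.trans hxu) (hy.trans hyv)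
    (huy.trans hyv).ne hu₀ hv₀ with ⟨hexp, hsum⟩ | ⟨haα, hbβ⟩
  · obtain rfl : α = β := sub_left_inj.1 hexp
    have hab : a + b = 0 := (mul_eq_zero.1 ((add_mul a b α).trans hsum)).resolve_right hα
    rw [← hxk, ← add_mul, hab, zero_mul]
  · have ha : a = 0 := (mul_eq_zero.1 haα).resolve_right hα
    have hb : b = 0 := (mul_eq_zero.1 hbβ).resolve_right hβ
    rw [← hxk, ha, hb, zero_mul, zero_mul, add_zero]

end RpowSums

theorem no_bounded_interval_equilibrium_general
    (p q c₅ c₆ c₇ : ℝ) (hp : p ≠ 1) (hq : q ≠ 1) (M : ℝ → ℝ)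
    (hM : ∀ x : ℝ, 0 < x → M x = c₅ * x ^ p + c₆ + c₇ * x ^ q - x)
    (c d : ℝ) (hc : 0 < c) (hcd : c < d) (hMc : deriv M c = 0) (hMd : deriv M d = 0) :
    (StrictMonoOn M (Icc c d) ∨ StrictAntiOn M (Icc c d)) ∧
      M c ≠ M d ∧ ¬(M c = 0 ∧ M d = 0) := by
  have hderiv : ∀ x, 0 < x →
      HasDerivAt M (c₅ * p * x ^ (p - 1) + c₇ * q * x ^ (q - 1) - 1) x := fun x hx =>
    (((hasDerivAt_mul_rpow_add_mul_rpow c₅ c₇ p q hx.ne').add_const c₆).fun_sub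
      (hasDerivAt_id x)).congr_of_eventuallyEq <| by
        filter_upwards [lt_mem_nhds hx] with t ht
        simp only [hM t ht, id, add_right_comm]
  have hcrit : ∀ x, 0 < x → deriv M x = 0 →
      c₅ * p * x ^ (p - 1) + c₇ * q * x ^ (q - 1) = 1 := fun x hx h₀ =>
    sub_eq_zero.1 ((hderiv x hx).deriv.symm.trans h₀)
  have hne : ∀ x ∈ interior (Icc c d), deriv M x ≠ 0 := by
    rw [interior_Icc]
    rintro x ⟨hcx, hxd⟩ hMx
    exact one_ne_zero <| eq_zero_of_mul_rpow_add_mul_rpow_eq (sub_ne_zero.2 hp) (sub_ne_zero.2 hq)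
      hc hcx hxd (hcrit c hc hMc) (hcrit x (hc.trans hcx) hMx) (hcrit d (hc.trans hcd) hMd)
  have hmono := strictMonoOn_or_strictAntiOn_of_deriv_ne_zero (convex_Icc c d)
    (fun x hx => (hderiv x (hc.trans_le hx.1)).continuousAt.continuousWithinAt) hne
  have hinj : InjOn M (Icc c d) := hmono.elim StrictMonoOn.injOn StrictAntiOn.injOn
  have hMcd : M c ≠ M d :=
    hinj.ne (left_mem_Icc.2 hcd.le) (right_mem_Icc.2 hcd.le) hcd.ne
  exact ⟨hmono, hMcd, fun h => hMcd (h.1.trans h.2.symm)⟩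

/-- Case 4 of the proof of Theorem 4.3: for `ξ ∈ (0,1)`, `ξ ≠ 1/2` and
`M(x) = c₅x^(1−ξ) + c₆ + c₇x^(2−2ξ) − x` (real powers), if `0 < c < d` and
`M'(c) = M'(d) = 0`, then `M` is strictly monotone on `[c, d]`; in particular
`M(c) ≠ M(d)`, so `M(c)` and `M(d)` cannot both equal `0`. -/
theorem no_bounded_interval_equilibrium
    (ξ c₅ c₆ c₇ : ℝ) (hξ : ξ ∈ Set.Ioo (0 : ℝ) 1) (hξ' : ξ ≠ 1 / 2)
    (M : ℝ → ℝ)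
    (hM : ∀ x : ℝ, 0 < x → M x = c₅ * x ^ (1 - ξ) + c₆ + c₇ * x ^ (2 - 2 * ξ) - x)
    (c d : ℝ) (hc : 0 < c) (hcd : c < d)
    (hMc : deriv M c = 0) (hMd : deriv M d = 0) :
    (StrictMonoOn M (Set.Icc c d) ∨ StrictAntiOn M (Set.Icc c d)) ∧
      M c ≠ M d ∧ ¬(M c = 0 ∧ M d = 0) :=
  no_bounded_interval_equilibrium_general (1 - ξ) (2 - 2 * ξ) c₅ c₆ c₇
    (fun h => hξ.1.ne' (by linarith)) (fun h => hξ' (by linarith)) M hM c d hc hcd hMc hMd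
end
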